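/- Let M = ⟨A | u = v⟩ with |v| ≤ |u| and suppose v is not a prefix of u. Then M is R-trivial, and moreover for words w, w' ∈ A*, [w]_M = [ww']_M implies w' = ε. -/

import Mathlib

/-- The congruence on a free monoid generated by the single relation `u = v`. -/
def oneRelCon {A : Type*} (u v : FreeMonoid A) : Con (FreeMonoid A) :=
  conGen (fun a b => a = u ∧ b = v)

namespace RTriv

/-- One rewriting step, in either direction, for the relation `a :: u = b :: v`. -/
def Step {A : Type*} (a b : A) (u v : List A) (s t : List A) : Prop :=
  ∃ l r c d x y, ((c = a ∧ d = b ∧ x = u ∧ y = v) ∨ (c = b ∧ d = a ∧ x = v ∧ y = u)) ∧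
    s = l ++ (c :: (x ++ r)) ∧ t = l ++ (d :: (y ++ r))

/-- At most `n` rewriting steps. -/
def D {A : Type*} (a b : A) (u v : List A) : ℕ → List A → List A → Prop
  | 0, s, t => s = t
  | n + 1, s, t => ∃ z, D a b u v n s z ∧ (z = t ∨ Step a b u v z t)

variable {A : Type*} {a b : A} {u v : List A}

theorem Step.symm {s t : List A} (h : Step a b u v s t) : Step a b u v t s := by
  obtain ⟨l, r, c, d, x, y, h, hs, ht⟩ := h
  exact ⟨l, r, d, c, y, x, by tauto, ht, hs⟩

theorem Step.ctx {s t : List A} (h : Step a b u v s t) (p q : List A) :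
    Step a b u v (p ++ s ++ q) (p ++ t ++ q) := by
  obtain ⟨l, r, c, d, x, y, h, rfl, rfl⟩ := h
  exact ⟨p ++ l, r ++ q, c, d, x, y, h, by simp, by simp⟩

theorem D.ctx {n : ℕ} {s t : List A} (h : D a b u v n s t) (p q : List A) :
    D a b u v n (p ++ s ++ q) (p ++ t ++ q) := by
  induction n generalizing t with
  | zero => cases h; rfl
  | succ n ih =>
    obtain ⟨z, h1, h2⟩ := h
    refine ⟨_, ih h1, ?_⟩
    rcases h2 with rfl | h2
    · exact Or.inl rfl
    · exact Or.inr (h2.ctx p q)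

theorem D.trans {n m : ℕ} {s t z : List A} (h : D a b u v n s t) (h' : D a b u v m t z) :
    D a b u v (n + m) s z := by
  induction m generalizing z with
  | zero => cases h'; exact h
  | succ m ih =>
    obtain ⟨y, h1, h2⟩ := h'
    exact ⟨y, ih h1, h2⟩

theorem D.mono {n m : ℕ} {s t : List A} (h : D a b u v n s t) (hm : n ≤ m) :
    D a b u v m s t := by
  induction m, hm using Nat.le_induction with
  | base => exact h
  | succ m _ ih => exact ⟨t, ih, Or.inl rfl⟩

theorem D.one {s t : List A} (h : Step a b u v s t) : D a b u v 1 s t :=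
  ⟨s, rfl, Or.inr h⟩

theorem D.symm {n : ℕ} {s t : List A} (h : D a b u v n s t) : D a b u v n t s := by
  induction n generalizing t with
  | zero => exact Eq.symm h
  | succ n ih =>
    obtain ⟨z, h1, h2⟩ := h
    rcases h2 with rfl | h2
    · exact (ih h1).mono (Nat.le_succ n)
    · exact ((D.one h2.symm).trans (ih h1)).mono (by omega)

theorem D.nil {n : ℕ} {t : List A} (h : D a b u v n [] t) : t = [] := by
  induction n generalizing t with
  | zero => exact Eq.symm h
  | succ n ih =>
    obtain ⟨z, h1, h2⟩ := h
    obtain rfl := ih h1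
    rcases h2 with rfl | ⟨l, r, c, d, x, y, h, hs, ht⟩
    · rfl
    · simp at hs

/-- A step from a nonempty word is at the head or in the tail. -/
theorem Step.cases_head {c : A} {s z : List A} (h : Step a b u v (c :: s) z) :
    (∃ t, z = c :: t ∧ Step a b u v s t) ∨
    (∃ d x y r, ((c = a ∧ d = b ∧ x = u ∧ y = v) ∨ (c = b ∧ d = a ∧ x = v ∧ y = u)) ∧
      s = x ++ r ∧ z = d :: (y ++ r)) := by
  obtain ⟨l, r, c', d, x, y, h, hs, rfl⟩ := h
  cases l with
  | nil =>
    simp at hs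
    obtain ⟨rfl, rfl⟩ := hs
    exact Or.inr ⟨d, x, y, r, h, rfl, by simp⟩
  | cons e l =>
    simp at hs
    obtain ⟨rfl, rfl⟩ := hs
    exact Or.inl ⟨_, rfl, l, r, c', d, x, y, h, rfl, rfl⟩

/-- The shape of a word reached from `c :: s`. -/
def Shape (a b : A) (u v : List A) (n : ℕ) (c : A) (s z : List A) : Prop :=
  (∃ t, z = c :: t ∧ D a b u v n s t) ∨
  (∃ d x y r t i j, ((c = a ∧ d = b ∧ x = u ∧ y = v) ∨ (c = b ∧ d = a ∧ x = v ∧ y = u)) ∧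
    D a b u v i s (x ++ r) ∧ z = d :: t ∧ D a b u v j (y ++ r) t ∧ i + j + 1 ≤ n)

theorem Shape.cancel (hab : a ≠ b) {n : ℕ} {c : A} {s t : List A}
    (h : Shape a b u v n c s (c :: t)) : D a b u v n s t := by
  rcases h with ⟨t', h, h'⟩ | ⟨d, x, y, r, t', i, j, h, _, h', _⟩
  · simp at h; subst h; exact h'
  · simp at h'
    exfalso
    rcases h with ⟨rfl, rfl, _⟩ | ⟨rfl, rfl, _⟩
    · exact hab h'.1
    · exact hab h'.1.symm

theorem cancel_list (n : ℕ)
    (H : ∀ (c : A) (s t : List A), D a b u v n (c :: s) (c :: t) → D a b u v n s t)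
    (p s t : List A) (h : D a b u v n (p ++ s) (p ++ t)) : D a b u v n s t := by
  induction p with
  | nil => exact h
  | cons c p ih => exact ih (H c _ _ h)

theorem shape (hab : a ≠ b) (n : ℕ) : ∀ (c : A) (s z : List A),
    D a b u v n (c :: s) z → Shape a b u v n c s z := by
  induction n using Nat.strong_induction_on with
  | _ n IH =>
  intro c s z h
  cases n with
  | zero => exact Or.inl ⟨s, Eq.symm h, rfl⟩
  | succ n =>
  obtain ⟨w, h1, h2⟩ := h
  have h3 := IH n (Nat.lt_succ_self n) c s w h1
  rcases h2 with rfl | h2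
  · rcases h3 with ⟨t, h, h'⟩ | ⟨d, x, y, r, t, i, j, h, h4, h5, h6, h7⟩
    · exact Or.inl ⟨t, h, h'.mono (Nat.le_succ n)⟩
    · exact Or.inr ⟨d, x, y, r, t, i, j, h, h4, h5, h6, by omega⟩
  rcases h3 with ⟨t, rfl, h'⟩ | ⟨d, x, y, r, t, i, j, h, h4, rfl, h6, h7⟩
  · rcases h2.cases_head with ⟨t', rfl, hs⟩ | ⟨d, x, y, r, h, rfl, rfl⟩
    · exact Or.inl ⟨t', rfl, t, h', Or.inr hs⟩
    · exact Or.inr ⟨d, x, y, r, _, n, 0, h, h', rfl, rfl, by omega⟩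
  · rcases h2.cases_head with ⟨t', rfl, hs⟩ | ⟨d', x', y', r', h', rfl, rfl⟩
    · exact Or.inr ⟨d, x, y, r, t', i, j + 1, h, h4, rfl, ⟨t, h6, Or.inr hs⟩, by omega⟩
    · have e : d' = c ∧ x' = y ∧ y' = x := by
        rcases h with ⟨rfl, rfl, rfl, rfl⟩ | ⟨rfl, rfl, rfl, rfl⟩ <;>
        rcases h' with ⟨h1, h2, h3, h4⟩ | ⟨h1, h2, h3, h4⟩
        · exact absurd h1.symm hab
        · exact ⟨h2, h3, h4⟩
        · exact ⟨h2, h3, h4⟩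
        · exact absurd h1 hab
      obtain ⟨rfl, rfl, rfl⟩ := e
      have h8 : D a b u v j r r' := cancel_list j
        (fun c s t h => (IH j (by omega) c s _ h).cancel hab) _ _ _ h6
      have h9 := h8.ctx y' []
      simp only [List.append_nil] at h9
      exact Or.inl ⟨_, rfl, (h4.trans h9).mono (by omega)⟩

theorem no_cycle (hab : a ≠ b) {n : ℕ} {w x : List A} (h : D a b u v n w (w ++ x)) :
    x = [] := by
  apply D.nil (n := n) (a := a) (b := b) (u := u) (v := v)
  refine cancel_list n (fun c s t h => (shape hab n c s _ h).cancel hab) w [] x ?_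
  simpa using h

/-- The congruence generated by the steps. -/
def stepCon (a b : A) (u v : List A) : Con (FreeMonoid A) where
  r s t := ∃ n, D a b u v n s.toList t.toList
  iseqv :=
    { refl := fun _ => ⟨0, rfl⟩
      symm := fun ⟨n, h⟩ => ⟨n, h.symm⟩
      trans := fun ⟨n, h⟩ ⟨m, h'⟩ => ⟨n + m, h.trans h'⟩ }
  mul' := by
    rintro w x y z ⟨n, h⟩ ⟨m, h'⟩
    refine ⟨n + m, ?_⟩
    have h1 := h.ctx [] y.toList
    have h2 := h'.ctx x.toList []
    simp only [List.nil_append, List.append_nil] at h1 h2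
    simpa using h1.trans h2

theorem split (u v : List A) (hlen : v.length ≤ u.length) (hpre : ¬ v <+: u) :
    ∃ p a b u' v', a ≠ b ∧ u = p ++ a :: u' ∧ v = p ++ b :: v' := by
  induction v generalizing u with
  | nil => simp at hpre
  | cons b v ih =>
    cases u with
    | nil => simp at hlen
    | cons a u =>
      by_cases e : a = b
      · subst e
        obtain ⟨p, c, d, u', v', h, rfl, rfl⟩ := ih u (by simpa using hlen) (by simpa using hpre)
        exact ⟨a :: p, c, d, u', v', h, rfl, rfl⟩
      · exact ⟨[], a, b, u, v, e, rfl, rfl⟩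

theorem main (u v : FreeMonoid A)
    (hlen : v.length ≤ u.length)
    (hpre : ¬ ∃ a, u = v * a) (w w' : FreeMonoid A) (h : oneRelCon u v w (w * w')) : w' = 1 := by
  obtain ⟨p, a, b, u', v', hab, hu, hv⟩ := split u.toList v.toList hlen (by
    rintro ⟨t, ht⟩
    exact hpre ⟨FreeMonoid.ofList t, ht.symm⟩)
  have hle : oneRelCon u v ≤ stepCon a b u' v' := by
    apply Con.conGen_le.2
    rintro x y ⟨rfl, rfl⟩
    refine ⟨1, D.one ⟨p, [], a, b, u', v', by tauto, ?_, ?_⟩⟩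
    · simpa using hu
    · simpa using hv
  obtain ⟨n, hn⟩ := hle h
  exact no_cycle hab (w := w.toList) (x := w'.toList) hn

end RTriv

/-- Let `M = ⟨A | u = v⟩` with `|v| ≤ |u|` and `v` not a prefix of `u`.
Then `M` is R-trivial (mutually right-divisible elements are equal), and moreover
`[w]_M = [w·w']_M` implies `w' = ε`. -/
theorem r_trivial_of_not_prefix {A : Type*} (u v : FreeMonoid A)
    (hlen : v.length ≤ u.length)
    (hpre : ¬ ∃ a, u = v * a) :
    (∀ m m' : (oneRelCon u v).Quotient,
        (∃ a, m' = m * a) → (∃ b, m = m' * b) → m = m') ∧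
    (∀ w w' : FreeMonoid A, oneRelCon u v w (w * w') → w' = 1) := by
  have key := RTriv.main u v hlen hpre
  refine ⟨?_, key⟩
  rintro m m' ⟨a, rfl⟩ ⟨b, hb⟩
  induction m using Con.induction_on with | _ w
  induction a using Con.induction_on with | _ x
  induction b using Con.induction_on with | _ y
  have h1 : x * y = 1 := by
    apply key w
    rw [← mul_assoc]
    exact (Con.eq _).1 hb
  have h2 : x = 1 := by
    have h3 : x.toList ++ y.toList = [] := h1
    exact (List.append_eq_nil_iff.1 h3).1
  subst h2
  exact (mul_one _).symm
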